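/- Theorem 1 (telescoping identity for the Diaster proxy reward, in expectation): Assume ρ_i^π(s) > 0 for every state s ∈ S and every 0 ≤ i ≤ T. Then for every subsequence length h with 2 ≤ h ≤ T and every time step t with 0 ≤ t ≤ T − h, Σ_{i=t}^{t+h−1} Σ_{s∈S} Σ_{a∈A} ρ_i^π(s) π(a|s) r̂_i^π(s,a) = Σ_{τ_{0:t+h}} 𝒯_{t+h}^π(τ_{0:t+h}) R_sub(τ_{0:t+h}) − Σ_{τ_{0:t}} 𝒯_t^π(τ_{0:t}) R_sub(τ_{0:t}); that is, under the on-policy distribution, the expected sum of the step-wise proxy rewards over any consecutive h steps equals the expected difference of the two sub-trajectory rewards that differ by h steps. -/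

import Mathlib

open Finset

/-- Trajectory distribution 𝒯_t^π. -/
noncomputable def Ttraj {S A : Type*} (ρ0 : S → ℝ) (P : S → A → S → ℝ)
    (pol : S → A → ℝ) : (t : ℕ) → (Fin t → S × A) → ℝ
  | 0, _ => 1
  | t + 1, τ =>
      ρ0 (τ 0).1 * pol (τ 0).1 (τ 0).2 *
        ∏ i : Fin t,
          (P (τ i.castSucc).1 (τ i.castSucc).2 (τ i.succ).1 *
            pol (τ i.succ).1 (τ i.succ).2)

/-- On-policy state distribution ρ_t^π. -/
noncomputable def rhoPi {S A : Type*} [Fintype S] [Fintype A] (ρ0 : S → ℝ)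
    (P : S → A → S → ℝ) (pol : S → A → ℝ) : ℕ → S → ℝ
  | 0 => ρ0
  | t + 1 => fun s =>
      ∑ τ : Fin (t + 1) → S × A,
        Ttraj ρ0 P pol (t + 1) τ * P (τ (Fin.last t)).1 (τ (Fin.last t)).2 s

/-- Conditioned sub-trajectory distribution Γ_t^π(τ|s). -/
noncomputable def GammaPi {S A : Type*} [Fintype S] [Fintype A] (ρ0 : S → ℝ)
    (P : S → A → S → ℝ) (pol : S → A → ℝ) :
    (t : ℕ) → (Fin t → S × A) → S → ℝ
  | 0, _, _ => 1
  | t + 1, τ, s =>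
      Ttraj ρ0 P pol (t + 1) τ * P (τ (Fin.last t)).1 (τ (Fin.last t)).2 s /
        rhoPi ρ0 P pol (t + 1) s

/-- Step-wise proxy reward r̂_t^π(s,a). -/
noncomputable def rhat {S A : Type*} [Fintype S] [Fintype A] (ρ0 : S → ℝ)
    (P : S → A → S → ℝ) (pol : S → A → ℝ)
    (Rsub : (t : ℕ) → (Fin t → S × A) → ℝ) (t : ℕ) (s : S) (a : A) : ℝ :=
  ∑ τ : Fin t → S × A,
    GammaPi ρ0 P pol t τ s * (Rsub (t + 1) (Fin.snoc τ (s, a)) - Rsub t τ)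

/-- h-step transition kernel μ_h^π (junk value 0 at h = 0). -/
noncomputable def muStep {S A : Type*} [Fintype S] [Fintype A]
    (P : S → A → S → ℝ) (pol : S → A → ℝ) : ℕ → S → A → S → ℝ
  | 0, _, _, _ => 0
  | 1, s, a, s' => P s a s'
  | h + 2, s, a, s'' =>
      ∑ s', ∑ a', muStep P pol (h + 1) s a s' * pol s' a' * P s' a' s''

/-!
Multiplying `Γ_t^π(τ | s)` by `ρ_t^π(s)` cancels the normalisation and leaves the joint probability
of the history `τ` and the state `s`; multiplying by `π(a | s)` as well gives the probability of the
extended history `τ⌢(s, a)`. Hence the expected proxy reward at time `t` is the expectation of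
`R_sub(τ⌢(s, a)) - R_sub(τ)` over histories of length `t + 1`, and since the law of these histories
projects onto the law of histories of length `t`, it is the increment of the expected sub-trajectory
reward. These increments telescope.
-/

theorem sum_univ_eq_sum_sum_snoc {X M : Type*} [Fintype X] [AddCommMonoid M] {n : ℕ}
    (f : (Fin (n + 1) → X) → M) :
    ∑ σ, f σ = ∑ τ : Fin n → X, ∑ x, f (Fin.snoc τ x) := by
  rw [← (Fin.snocEquiv fun _ : Fin (n + 1) => X).sum_comp f, Fintype.sum_prod_type_right]
  rfl

section JointWeight

variable {S A : Type*} {ρ0 : S → ℝ} {P : S → A → S → ℝ} {pol : S → A → ℝ} {t : ℕ}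

/-- The joint distribution of the sub-trajectory `τ_{0:t}` and the state `s_t` that follows it:
`ρ0` at `t = 0`, where no transition precedes, and the numerator of `Γ_t^π(τ | s)` for `t ≥ 1`. -/
noncomputable def jointWeight (ρ0 : S → ℝ) (P : S → A → S → ℝ) (pol : S → A → ℝ) :
    (t : ℕ) → (Fin t → S × A) → S → ℝ
  | 0, _, s => ρ0 s
  | t + 1, τ, s => Ttraj ρ0 P pol (t + 1) τ * P (τ (Fin.last t)).1 (τ (Fin.last t)).2 s

theorem Ttraj_nonneg (hρ0 : ∀ s, 0 ≤ ρ0 s) (hP : ∀ s a s', 0 ≤ P s a s')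
    (hpol : ∀ s a, 0 ≤ pol s a) (τ : Fin t → S × A) : 0 ≤ Ttraj ρ0 P pol t τ := by
  cases t with
  | zero => exact zero_le_one
  | succ t =>
    exact mul_nonneg (mul_nonneg (hρ0 _) (hpol _ _))
      (prod_nonneg fun _ _ => mul_nonneg (hP _ _ _) (hpol _ _))

theorem jointWeight_nonneg (hρ0 : ∀ s, 0 ≤ ρ0 s) (hP : ∀ s a s', 0 ≤ P s a s')
    (hpol : ∀ s a, 0 ≤ pol s a) (τ : Fin t → S × A) (s : S) :
    0 ≤ jointWeight ρ0 P pol t τ s := by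
  cases t with
  | zero => exact hρ0 s
  | succ t => exact mul_nonneg (Ttraj_nonneg hρ0 hP hpol τ) (hP _ _ _)

theorem Ttraj_snoc (τ : Fin t → S × A) (x : S × A) :
    Ttraj ρ0 P pol (t + 1) (Fin.snoc τ x) = jointWeight ρ0 P pol t τ x.1 * pol x.1 x.2 := by
  cases t with
  | zero => simp [Ttraj, jointWeight, Fin.snoc]
  | succ t =>
    have snoc_zero : (Fin.snoc τ x : Fin (t + 2) → S × A) 0 = τ 0 :=
      Fin.snoc_castSucc (α := fun _ => S × A) x τ 0
    simp only [Ttraj, jointWeight, Fin.prod_univ_castSucc, Fin.succ_castSucc, Fin.succ_last,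
      Fin.snoc_castSucc, Fin.snoc_last, snoc_zero]
    ring

variable [Fintype S]

theorem sum_jointWeight (hρ0 : ∑ s, ρ0 s = 1) (hP : ∀ s a, ∑ s', P s a s' = 1)
    (τ : Fin t → S × A) : ∑ s, jointWeight ρ0 P pol t τ s = Ttraj ρ0 P pol t τ := by
  cases t with
  | zero => exact hρ0
  | succ t => simp only [jointWeight, ← mul_sum, hP, mul_one]

variable [Fintype A]

theorem sum_Ttraj_snoc (hρ0 : ∑ s, ρ0 s = 1) (hP : ∀ s a, ∑ s', P s a s' = 1)
    (hpol : ∀ s, ∑ a, pol s a = 1) (τ : Fin t → S × A) :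
    ∑ x, Ttraj ρ0 P pol (t + 1) (Fin.snoc τ x) = Ttraj ρ0 P pol t τ := by
  simp only [Ttraj_snoc, Fintype.sum_prod_type, ← mul_sum, hpol, mul_one, sum_jointWeight hρ0 hP]

theorem rhoPi_eq_sum_jointWeight (s : S) :
    rhoPi ρ0 P pol t s = ∑ τ, jointWeight ρ0 P pol t τ s := by
  cases t with
  | zero => simp [rhoPi, jointWeight]
  | succ t => rfl

theorem jointWeight_eq_zero_of_rhoPi_eq_zero (hρ0 : ∀ s, 0 ≤ ρ0 s)
    (hP : ∀ s a s', 0 ≤ P s a s') (hpol : ∀ s a, 0 ≤ pol s a) {s : S}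
    (hs : rhoPi ρ0 P pol t s = 0) (τ : Fin t → S × A) : jointWeight ρ0 P pol t τ s = 0 := by
  rw [rhoPi_eq_sum_jointWeight,
    sum_eq_zero_iff_of_nonneg fun τ _ => jointWeight_nonneg hρ0 hP hpol τ s] at hs
  exact hs τ (mem_univ τ)

-- Where `ρ_t^π(s) = 0` both sides vanish, whatever value division by zero gives `Γ_t^π(τ | s)`.
theorem rhoPi_mul_GammaPi (hρ0 : ∀ s, 0 ≤ ρ0 s) (hP : ∀ s a s', 0 ≤ P s a s')
    (hpol : ∀ s a, 0 ≤ pol s a) (τ : Fin t → S × A) (s : S) :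
    rhoPi ρ0 P pol t s * GammaPi ρ0 P pol t τ s = jointWeight ρ0 P pol t τ s := by
  cases t with
  | zero => exact mul_one _
  | succ t =>
    exact mul_div_cancel_of_imp' fun hs =>
      jointWeight_eq_zero_of_rhoPi_eq_zero hρ0 hP hpol hs τ

end JointWeight

section ProxyReward

variable {S A : Type*} [Fintype S] [Fintype A] {ρ0 : S → ℝ} {P : S → A → S → ℝ}
  {pol : S → A → ℝ}

/-- The expectation of the sub-trajectory reward `R_sub(τ_{0:t})` under `𝒯_t^π`. -/
noncomputable def expectedSubReward (ρ0 : S → ℝ) (P : S → A → S → ℝ) (pol : S → A → ℝ)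
    (Rsub : (t : ℕ) → (Fin t → S × A) → ℝ) (t : ℕ) : ℝ :=
  ∑ τ, Ttraj ρ0 P pol t τ * Rsub t τ

theorem rhoPi_mul_pol_mul_rhat (hρ0 : ∀ s, 0 ≤ ρ0 s) (hP : ∀ s a s', 0 ≤ P s a s')
    (hpol : ∀ s a, 0 ≤ pol s a) (Rsub : (t : ℕ) → (Fin t → S × A) → ℝ) (t : ℕ) (s : S) (a : A) :
    rhoPi ρ0 P pol t s * pol s a * rhat ρ0 P pol Rsub t s a =
      ∑ τ : Fin t → S × A, Ttraj ρ0 P pol (t + 1) (Fin.snoc τ (s, a)) *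
        (Rsub (t + 1) (Fin.snoc τ (s, a)) - Rsub t τ) := by
  rw [rhat, mul_sum]
  refine sum_congr rfl fun τ _ => ?_
  rw [Ttraj_snoc, ← rhoPi_mul_GammaPi hρ0 hP hpol]
  ring

theorem sum_rhoPi_mul_pol_mul_rhat (hρ0nn : ∀ s, 0 ≤ ρ0 s) (hρ0sum : ∑ s, ρ0 s = 1)
    (hPnn : ∀ s a s', 0 ≤ P s a s') (hPsum : ∀ s a, ∑ s', P s a s' = 1)
    (hpolnn : ∀ s a, 0 ≤ pol s a) (hpolsum : ∀ s, ∑ a, pol s a = 1)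
    (Rsub : (t : ℕ) → (Fin t → S × A) → ℝ) (t : ℕ) :
    ∑ s, ∑ a, rhoPi ρ0 P pol t s * pol s a * rhat ρ0 P pol Rsub t s a =
      expectedSubReward ρ0 P pol Rsub (t + 1) - expectedSubReward ρ0 P pol Rsub t := by
  calc ∑ s, ∑ a, rhoPi ρ0 P pol t s * pol s a * rhat ρ0 P pol Rsub t s a
    _ = ∑ τ : Fin t → S × A, ∑ x, Ttraj ρ0 P pol (t + 1) (Fin.snoc τ x) *
          (Rsub (t + 1) (Fin.snoc τ x) - Rsub t τ) := by
      simp only [rhoPi_mul_pol_mul_rhat hρ0nn hPnn hpolnn]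
      rw [← Fintype.sum_prod_type', sum_comm]
    _ = ∑ τ : Fin t → S × A, ∑ x, Ttraj ρ0 P pol (t + 1) (Fin.snoc τ x) *
            Rsub (t + 1) (Fin.snoc τ x) -
          ∑ τ : Fin t → S × A, (∑ x, Ttraj ρ0 P pol (t + 1) (Fin.snoc τ x)) * Rsub t τ := by
      simp only [mul_sub, sum_sub_distrib, sum_mul]
    _ = expectedSubReward ρ0 P pol Rsub (t + 1) - expectedSubReward ρ0 P pol Rsub t := by
      simp only [expectedSubReward, sum_univ_eq_sum_sum_snoc (n := t),
        sum_Ttraj_snoc hρ0sum hPsum hpolsum]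

end ProxyReward

theorem diaster_theorem1_general {S A : Type*} [Fintype S] [Fintype A]
    {ρ0 : S → ℝ} (hρ0nn : ∀ s, 0 ≤ ρ0 s) (hρ0sum : ∑ s, ρ0 s = 1)
    {P : S → A → S → ℝ} (hPnn : ∀ s a s', 0 ≤ P s a s') (hPsum : ∀ s a, ∑ s', P s a s' = 1)
    {pol : S → A → ℝ} (hpolnn : ∀ s a, 0 ≤ pol s a) (hpolsum : ∀ s, ∑ a, pol s a = 1)
    (Rsub : (t : ℕ) → (Fin t → S × A) → ℝ) {t u : ℕ} (htu : t ≤ u) :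
    ∑ i ∈ Ico t u, ∑ s, ∑ a, rhoPi ρ0 P pol i s * pol s a * rhat ρ0 P pol Rsub i s a =
      ∑ τ, Ttraj ρ0 P pol u τ * Rsub u τ - ∑ τ, Ttraj ρ0 P pol t τ * Rsub t τ := by
  simp only [sum_rhoPi_mul_pol_mul_rhat hρ0nn hρ0sum hPnn hPsum hpolnn hpolsum]
  exact sum_Ico_sub (expectedSubReward ρ0 P pol Rsub) htu

/-- Theorem 1 of Diaster: telescoping identity for the proxy reward in expectation. -/
theorem diaster_theorem1 {S A : Type*} [Fintype S] [Fintype A] [Nonempty S] [Nonempty A]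
    (T : ℕ) (hT : 1 ≤ T)
    (ρ0 : S → ℝ) (hρ0nn : ∀ s, 0 ≤ ρ0 s) (hρ0sum : ∑ s, ρ0 s = 1)
    (P : S → A → S → ℝ) (hPnn : ∀ s a s', 0 ≤ P s a s')
    (hPsum : ∀ s a, ∑ s', P s a s' = 1)
    (pol : S → A → ℝ) (hpolnn : ∀ s a, 0 ≤ pol s a)
    (hpolsum : ∀ s, ∑ a, pol s a = 1)
    (Rsub : (t : ℕ) → (Fin t → S × A) → ℝ)
    (hRsub0 : ∀ τ : Fin 0 → S × A, Rsub 0 τ = 0)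
    (hρpos : ∀ i ≤ T, ∀ s, 0 < rhoPi ρ0 P pol i s)
    (h t : ℕ) (hh : 2 ≤ h) (hhT : h ≤ T) (hth : t + h ≤ T) :
    ∑ i ∈ Finset.Ico t (t + h), ∑ s, ∑ a,
        rhoPi ρ0 P pol i s * pol s a * rhat ρ0 P pol Rsub i s a
      = (∑ τ : Fin (t + h) → S × A, Ttraj ρ0 P pol (t + h) τ * Rsub (t + h) τ)
        - ∑ τ : Fin t → S × A, Ttraj ρ0 P pol t τ * Rsub t τ := by
  exact diaster_theorem1_general hρ0nn hρ0sum hPnn hPsum hpolnn hpolsum Rsub (Nat.le_add_right t h)
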